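/- Let ω₁, ω₂, ω₃ ∈ ℂ with Im(ωᵢ) < 0 for i = 1, 2, 3, and let p, q ∈ ℝ. For k ∈ ℝ define σ₁^±(k) = ±(1/(2ω₁))·1/(k ∓ ω₁), σ₂^±(k) = ±(1/(2ω₂))·1/(k − p ∓ ω₂), σ₃^±(k) = ±(1/(2ω₃))·1/(k − q ∓ ω₃), and τᵢ^±(k) = −conj(σᵢ^∓(k)) (complex conjugation of the value). Set zᵢ = σᵢ⁺ + σᵢ⁻, wᵢ = τᵢ⁺ + τᵢ⁻, uᵢ = σᵢ⁺ + τᵢ⁻, vᵢ = σᵢ⁻ + τᵢ⁺ (pointwise in k). Then each of the eight functions z₁z₂z₃, w₁w₂w₃, u₁v₂z₃, z₁u₂v₃, v₁z₂u₃, v₁u₂w₃, w₁v₂u₃, u₁w₂v₃ is (Bochner) integrable on ℝ and ∫z₁z₂z₃ − ∫w₁w₂w₃ − ∫u₁v₂z₃ − ∫z₁u₂v₃ − ∫v₁z₂u₃ + ∫v₁u₂w₃ + ∫w₁v₂u₃ + ∫u₁w₂v₃ = 0, where all integrals are over k ∈ ℝ. -/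

import Mathlib

open MeasureTheory Complex

/-!
Along the real line `σᵢ⁺ - τᵢ⁺` extends holomorphically to the closed upper half-plane and
`σᵢ⁻ - τᵢ⁻` to the closed lower one, both with decay `O(1 / k)`. A product of at least two functions
polarized in the same direction therefore has vanishing integral: push the contour to infinity. The
combination of integrands in the theorem is, pointwise, the sum of the two polarized products
`∏ (σᵢ⁺ - τᵢ⁺) + ∏ (σᵢ⁻ - τᵢ⁻)`.
-/

open Asymptotics Bornology Filter Topology
open scoped ComplexConjugate

section HalfPlane

variable {E : Type*} [NormedAddCommGroup E] [NormedSpace ℂ E] {f : ℂ → E}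

lemma intervalIntegral_eq_of_diffContOnCl_upperHalfPlane {R : ℝ}
    (hf : DiffContOnCl ℂ f {z | 0 < z.im}) (hR : 0 ≤ R) :
    (∫ x : ℝ in -R..R, f x) = (∫ x : ℝ in -R..R, f (x + R * I))
      - I • (∫ y : ℝ in (0 : ℝ)..R, f ((R : ℝ) + y * I))
      + I • (∫ y : ℝ in (0 : ℝ)..R, f ((-R : ℝ) + y * I)) := by
  have h := integral_boundary_rect_eq_zero_of_continuousOn_of_differentiableOn f
    ((-R : ℝ) : ℂ) (R + R * I)
    (hf.continuousOn.mono fun z hz => by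
      simpa [closure_setOfPred_lt_im, hR] using (mem_reProdIm.1 hz).2.1)
    (hf.differentiableOn.mono fun z hz => by
      simpa [hR] using (mem_reProdIm.1 hz).2.1)
  simp only [ofReal_im, ofReal_re, add_im, add_re, mul_im, mul_re, I_im, I_re, mul_one, mul_zero,
    zero_add, add_zero, sub_zero, ofReal_zero, zero_mul] at h
  rw [← sub_eq_zero, ← h]
  abel

lemma norm_intervalIntegral_le_of_diffContOnCl_upperHalfPlane {R M : ℝ}
    (hf : DiffContOnCl ℂ f {z | 0 < z.im}) (hR : 0 ≤ R)
    (hM : ∀ z : ℂ, 0 ≤ z.im → R ≤ ‖z‖ → ‖f z‖ ≤ M) :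
    ‖∫ x : ℝ in -R..R, f x‖ ≤ 4 * R * M := by
  have top : ‖∫ x : ℝ in -R..R, f (x + R * I)‖ ≤ M * |R - -R| := by
    refine intervalIntegral.norm_integral_le_of_norm_le_const fun x _ => hM _ (by simpa) ?_
    simpa using (le_abs_self _).trans (abs_im_le_norm (x + R * I : ℂ))
  have side (s : ℝ) (hs : |s| = R) :
      ‖I • ∫ y : ℝ in (0 : ℝ)..R, f (s + y * I)‖ ≤ M * |R - 0| := by
    rw [norm_smul, norm_I, one_mul]
    refine intervalIntegral.norm_integral_le_of_norm_le_const fun y hy => hM _ ?_ ?_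
    · rw [Set.uIoc_of_le hR] at hy
      simpa using hy.1.le
    · simpa [hs] using abs_re_le_norm (s + y * I : ℂ)
  calc ‖∫ x : ℝ in -R..R, f x‖
      ≤ M * |R - -R| + M * |R - 0| + M * |R - 0| := by
        rw [intervalIntegral_eq_of_diffContOnCl_upperHalfPlane hf hR]
        exact norm_add_le_of_le (norm_sub_le_of_le top (side R (abs_of_nonneg hR)))
          (side (-R) (by rw [abs_neg, abs_of_nonneg hR]))
    _ = 4 * R * M := by
        rw [sub_neg_eq_add, sub_zero, abs_of_nonneg hR, abs_of_nonneg (by positivity)]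
        ring

theorem integral_ofReal_eq_zero_of_isLittleO_inv
    (hf : DiffContOnCl ℂ f {z | 0 < z.im})
    (ho : f =o[cobounded ℂ ⊓ 𝓟 {z | 0 ≤ z.im}] fun z => z⁻¹)
    (hi : Integrable fun x : ℝ => f x) : ∫ x : ℝ, f x = 0 := by
  refine tendsto_nhds_unique
    (intervalIntegral_tendsto_integral hi tendsto_neg_atTop_atBot tendsto_id) ?_
  refine NormedAddGroup.tendsto_nhds_zero.2 fun ε hε => ?_
  have small : ∀ᶠ R : ℝ in atTop, ∀ z : ℂ, R ≤ ‖z‖ → 0 ≤ z.im → ‖f z‖ ≤ ε / 8 * ‖z⁻¹‖ := by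
    have h := eventually_inf_principal.1 (ho.bound (by positivity : 0 < ε / 8))
    rw [← comap_norm_atTop, eventually_comap] at h
    exact (eventually_forall_ge_atTop.2 h).mono fun R hR z hz => hR _ hz z rfl
  filter_upwards [small, eventually_gt_atTop 0] with R hRf hR
  calc ‖∫ x : ℝ in -R..R, f x‖ ≤ 4 * R * (ε / 8 * R⁻¹) :=
        norm_intervalIntegral_le_of_diffContOnCl_upperHalfPlane hf hR.le fun z hz hRz =>
          (hRf z hRz hz).trans (by rw [norm_inv]; gcongr)
    _ = ε / 2 := by field_simp; norm_num
    _ < ε := half_lt_self hε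

end HalfPlane

/-- Continuous functions on the real line that are `O(1 / k)` at infinity: the regularity shared by
all propagators, whichever half-plane their poles lie in. -/
structure HasInverseDecay {E : Type*} [NormedAddCommGroup E] (f : ℝ → E) : Prop where
  continuous : Continuous f
  isBigO : f =O[cobounded ℝ] fun k => k⁻¹

namespace HasInverseDecay

lemma add {E : Type*} [NormedAddCommGroup E] {f g : ℝ → E} (hf : HasInverseDecay f)
    (hg : HasInverseDecay g) : HasInverseDecay (f + g) :=
  ⟨hf.continuous.add hg.continuous, hf.isBigO.add hg.isBigO⟩

variable {A : Type*} [NormedRing A] {f g h : ℝ → A}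

lemma mul (hf : HasInverseDecay f) (hg : HasInverseDecay g) : HasInverseDecay (f * g) := by
  refine ⟨hf.continuous.mul hg.continuous, ?_⟩
  have hg_one : g =O[cobounded ℝ] fun _ => (1 : ℝ) :=
    hg.isBigO.trans (tendsto_inv₀_cobounded.isBigO_one ℝ)
  simpa only [mul_one] using! hf.isBigO.mul hg_one

lemma integrable_mul (hf : HasInverseDecay f) (hg : HasInverseDecay g) : Integrable (f * g) := by
  have inv_sq : (fun k : ℝ => k⁻¹ * k⁻¹) =O[cobounded ℝ] fun k => (1 + k ^ 2)⁻¹ := by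
    refine IsBigO.of_bound 2 ?_
    filter_upwards [eventually_cobounded_le_norm (1 : ℝ)] with k hk
    have : 1 ≤ k ^ 2 := by simpa using one_le_pow₀ (n := 2) hk
    rw [← mul_inv, ← sq, Real.norm_of_nonneg (by positivity), Real.norm_of_nonneg (by positivity),
      ← div_eq_mul_inv, inv_le_comm₀ (by positivity) (by positivity), inv_div]
    linarith
  refine (hf.continuous.mul hg.continuous).locallyIntegrable.integrable_of_isBigO_cocompact ?_
    (integrable_inv_one_add_sq.integrableAtFilter _)
  rw [← Metric.cobounded_eq_cocompact]
  exact (hf.isBigO.mul hg.isBigO).trans inv_sq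

lemma integrable_mul_mul (hf : HasInverseDecay f) (hg : HasInverseDecay g)
    (hh : HasInverseDecay h) : Integrable (f * g * h) :=
  (hf.mul hg).integrable_mul hh

end HasInverseDecay

/-- A function of the real loop energy is positively polarized if it extends to a function
holomorphic on the upper half-plane, continuous up to the real line and `O(1 / z)` at infinity. Sums
of simple poles lying below the real axis are of this kind. -/
def IsPositivelyPolarized (f : ℝ → ℂ) : Prop :=
  ∃ F : ℂ → ℂ, DiffContOnCl ℂ F {z | 0 < z.im} ∧
    F =O[cobounded ℂ ⊓ 𝓟 {z | 0 ≤ z.im}] (fun z => z⁻¹) ∧ ∀ k : ℝ, F k = f k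

/-- The mirror notion for the lower half-plane, encoded by complex conjugation: `f` extends to the
lower half-plane iff `conj f` extends to the upper one. -/
def IsNegativelyPolarized (f : ℝ → ℂ) : Prop :=
  IsPositivelyPolarized fun k => conj (f k)

namespace IsPositivelyPolarized

variable {f g : ℝ → ℂ}

lemma pole (c : ℂ) {α : ℂ} (hα : α.im < 0) :
    IsPositivelyPolarized fun k => c * ((k : ℂ) - α)⁻¹ := by
  refine ⟨fun z => c * (z - α)⁻¹, DifferentiableOn.diffContOnCl fun z hz => ?_, ?_, fun _ => rfl⟩
  · have hzα : z - α ≠ 0 := by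
      rintro h
      rw [closure_setOfPred_lt_im, sub_eq_zero.1 h] at hz
      exact hα.not_ge hz
    exact DifferentiableAt.differentiableWithinAt (by fun_prop (disch := assumption))
  · have h := (spectrum.resolvent_isBigO_inv (𝕜 := ℂ) α).const_mul_left c
    simp only [resolvent, Ring.inverse_eq_inv', Algebra.algebraMap_self, RingHom.id_apply] at h
    exact h.mono inf_le_left

lemma neg (hf : IsPositivelyPolarized f) : IsPositivelyPolarized (-f) := by
  obtain ⟨F, hF, hO, hFf⟩ := hf
  exact ⟨-F, hF.neg, hO.neg_left, fun k => congrArg Neg.neg (hFf k)⟩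

lemma sub (hf : IsPositivelyPolarized f) (hg : IsPositivelyPolarized g) :
    IsPositivelyPolarized (f - g) := by
  obtain ⟨F, hF, hFO, hFf⟩ := hf
  obtain ⟨G, hG, hGO, hGg⟩ := hg
  exact ⟨F - G, hF.sub hG, hFO.sub hGO, fun k => congrArg₂ (· - ·) (hFf k) (hGg k)⟩

lemma mul (hf : IsPositivelyPolarized f) (hg : IsPositivelyPolarized g) :
    IsPositivelyPolarized (f * g) := by
  obtain ⟨F, hF, hFO, hFf⟩ := hf
  obtain ⟨G, hG, hGO, hGg⟩ := hg
  refine ⟨F * G, hF.smul hG, ?_, fun k => congrArg₂ (· * ·) (hFf k) (hGg k)⟩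
  have hG_one : G =O[cobounded ℂ ⊓ 𝓟 {z | 0 ≤ z.im}] fun _ => (1 : ℂ) :=
    hGO.trans ((tendsto_inv₀_cobounded.isBigO_one ℂ).mono inf_le_left)
  simpa only [mul_one] using! hFO.mul hG_one

lemma hasInverseDecay (hf : IsPositivelyPolarized f) : HasInverseDecay f := by
  obtain ⟨F, hF, hO, hFf⟩ := hf
  obtain rfl : (fun k : ℝ => F k) = f := funext hFf
  refine ⟨hF.continuousOn.comp_continuous continuous_ofReal fun k => ?_, ?_⟩
  · rw [closure_setOfPred_lt_im]
    exact (ofReal_im k).ge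
  · have h := hO.comp_tendsto (tendsto_inf.2 ⟨RCLike.tendsto_ofReal_cobounded_cobounded ℂ,
      tendsto_principal.2 (.of_forall fun k : ℝ => (ofReal_im k).ge)⟩)
    refine h.trans (.of_norm_right (.of_norm_le fun k => ?_))
    simp

theorem integral_mul_eq_zero (hf : IsPositivelyPolarized f) (hg : IsPositivelyPolarized g) :
    ∫ k, (f * g) k = 0 := by
  have hi := hf.hasInverseDecay.integrable_mul hg.hasInverseDecay
  obtain ⟨F, hF, hFO, hFf⟩ := hf
  obtain ⟨G, hG, hGO, hGg⟩ := hg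
  have hFG (k : ℝ) : (f * g) k = F k * G k := by rw [Pi.mul_apply, hFf, hGg]
  simp only [funext hFG] at hi ⊢
  refine integral_ofReal_eq_zero_of_isLittleO_inv (hF.smul hG) ?_ hi
  have hGo : G =o[cobounded ℂ ⊓ 𝓟 {z | 0 ≤ z.im}] fun _ => (1 : ℂ) :=
    hGO.trans_isLittleO <|
      ((isLittleO_one_iff ℂ).2 tendsto_inv₀_cobounded).mono inf_le_left
  simpa using hFO.mul_isLittleO hGo

lemma neg_conj (hf : IsPositivelyPolarized f) : IsNegativelyPolarized fun k => -conj (f k) := by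
  simpa [IsNegativelyPolarized] using! hf.neg

end IsPositivelyPolarized

namespace IsNegativelyPolarized

variable {f g : ℝ → ℂ}

lemma pole (c : ℂ) {α : ℂ} (hα : 0 < α.im) :
    IsNegativelyPolarized fun k => c * ((k : ℂ) - α)⁻¹ := by
  simpa [IsNegativelyPolarized] using
    IsPositivelyPolarized.pole (conj c) (α := conj α) (by simpa using hα)

lemma sub (hf : IsNegativelyPolarized f) (hg : IsNegativelyPolarized g) :
    IsNegativelyPolarized (f - g) := by
  simpa [IsNegativelyPolarized] using! IsPositivelyPolarized.sub hf hg

lemma mul (hf : IsNegativelyPolarized f) (hg : IsNegativelyPolarized g) :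
    IsNegativelyPolarized (f * g) := by
  simpa [IsNegativelyPolarized] using! IsPositivelyPolarized.mul hf hg

lemma hasInverseDecay (hf : IsNegativelyPolarized f) : HasInverseDecay f := by
  obtain ⟨hc, hO⟩ := IsPositivelyPolarized.hasInverseDecay hf
  refine ⟨by simpa [Function.comp_def] using continuous_conj.comp hc, ?_⟩
  exact .of_norm_left (by simpa using hO.norm_left)

theorem integral_mul_eq_zero (hf : IsNegativelyPolarized f) (hg : IsNegativelyPolarized g) :
    ∫ k, (f * g) k = 0 := by
  have h : ∫ k, conj ((f * g) k) = 0 := by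
    simpa using IsPositivelyPolarized.integral_mul_eq_zero hf hg
  rwa [integral_conj, map_eq_zero] at h

lemma neg_conj (hf : IsNegativelyPolarized f) : IsPositivelyPolarized fun k => -conj (f k) :=
  IsPositivelyPolarized.neg hf

end IsNegativelyPolarized

lemma integral_mul_add_mul_eq_zero {f₁ f₂ g₁ g₂ : ℝ → ℂ}
    (hf₁ : IsPositivelyPolarized f₁) (hf₂ : IsPositivelyPolarized f₂)
    (hg₁ : IsNegativelyPolarized g₁) (hg₂ : IsNegativelyPolarized g₂) :
    ∫ k, (f₁ * f₂ + g₁ * g₂) k = 0 := by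
  rw [integral_add' (hf₁.hasInverseDecay.integrable_mul hf₂.hasInverseDecay)
    (hg₁.hasInverseDecay.integrable_mul hg₂.hasInverseDecay),
    hf₁.integral_mul_eq_zero hf₂, hg₁.integral_mul_eq_zero hg₂, add_zero]

lemma triangle_polynomial_identity {A : Type*} [CommRing A] (σp σm τp τm : Fin 3 → A) :
    ∏ i, (σp i - τp i) + ∏ i, (σm i - τm i) =
      let z := σp + σm; let w := τp + τm; let u := σp + τm; let v := σm + τp
      z 0 * z 1 * z 2 - w 0 * w 1 * w 2 - u 0 * v 1 * z 2 - z 0 * u 1 * v 2 - v 0 * z 1 * u 2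
        + v 0 * u 1 * w 2 + w 0 * v 1 * u 2 + u 0 * w 1 * v 2 := by
  simp only [Fin.prod_univ_three, Pi.add_apply]
  ring

/-- A decomposition `σp + σm` of a propagator into a positively and a negatively polarized part. -/
structure IsPolarizedDecomposition (σp σm : ℝ → ℂ) : Prop where
  pos : IsPositivelyPolarized σp
  neg : IsNegativelyPolarized σm

namespace IsPolarizedDecomposition

lemma of_poles {σp σm : ℝ → ℂ} {c d ω : ℂ} (hω : ω.im < 0) (p : ℝ)
    (hσp : ∀ k, σp k = c * ((k : ℂ) - p - ω)⁻¹) (hσm : ∀ k, σm k = d * ((k : ℂ) - p + ω)⁻¹) :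
    IsPolarizedDecomposition σp σm where
  pos := by
    simpa only [funext hσp, sub_sub] using
      IsPositivelyPolarized.pole c (α := p + ω) (by simpa using hω)
  neg := by
    simpa only [funext hσm, sub_add] using
      IsNegativelyPolarized.pole d (α := p - ω) (by simpa using hω)

lemma neg_conj {σp σm τp τm : ℝ → ℂ} (hσ : IsPolarizedDecomposition σp σm)
    (hτp : ∀ k, τp k = -conj (σm k)) (hτm : ∀ k, τm k = -conj (σp k)) :
    IsPolarizedDecomposition τp τm :=
  ⟨funext hτp ▸ hσ.neg.neg_conj, funext hτm ▸ hσ.pos.neg_conj⟩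

end IsPolarizedDecomposition

theorem triangle_diagrammatic_cutting_equation_general (σp σm τp τm z w u v : Fin 3 → ℝ → ℂ)
    (hσ : ∀ i, IsPolarizedDecomposition (σp i) (σm i))
    (hτ : ∀ i, IsPolarizedDecomposition (τp i) (τm i))
    (hz : z = σp + σm) (hw : w = τp + τm) (hu : u = σp + τm) (hv : v = σm + τp) :
    Integrable (z 0 * z 1 * z 2) ∧ Integrable (w 0 * w 1 * w 2) ∧
    Integrable (u 0 * v 1 * z 2) ∧ Integrable (z 0 * u 1 * v 2) ∧
    Integrable (v 0 * z 1 * u 2) ∧ Integrable (v 0 * u 1 * w 2) ∧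
    Integrable (w 0 * v 1 * u 2) ∧ Integrable (u 0 * w 1 * v 2) ∧
    (∫ k, (z 0 * z 1 * z 2) k) - (∫ k, (w 0 * w 1 * w 2) k)
      - (∫ k, (u 0 * v 1 * z 2) k) - (∫ k, (z 0 * u 1 * v 2) k)
      - (∫ k, (v 0 * z 1 * u 2) k) + (∫ k, (v 0 * u 1 * w 2) k)
      + (∫ k, (w 0 * v 1 * u 2) k) + (∫ k, (u 0 * w 1 * v 2) k) = 0 := by
  have dz i : HasInverseDecay (z i) :=
    hz ▸ (hσ i).pos.hasInverseDecay.add (hσ i).neg.hasInverseDecay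
  have dw i : HasInverseDecay (w i) :=
    hw ▸ (hτ i).pos.hasInverseDecay.add (hτ i).neg.hasInverseDecay
  have du i : HasInverseDecay (u i) :=
    hu ▸ (hσ i).pos.hasInverseDecay.add (hτ i).neg.hasInverseDecay
  have dv i : HasInverseDecay (v i) :=
    hv ▸ (hσ i).neg.hasInverseDecay.add (hτ i).pos.hasInverseDecay
  have zzz := (dz 0).integrable_mul_mul (dz 1) (dz 2)
  have www := (dw 0).integrable_mul_mul (dw 1) (dw 2)
  have uvz := (du 0).integrable_mul_mul (dv 1) (dz 2)
  have zuv := (dz 0).integrable_mul_mul (du 1) (dv 2)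
  have vzu := (dv 0).integrable_mul_mul (dz 1) (du 2)
  have vuw := (dv 0).integrable_mul_mul (du 1) (dw 2)
  have wvu := (dw 0).integrable_mul_mul (dv 1) (du 2)
  have uwv := (du 0).integrable_mul_mul (dw 1) (dv 2)
  refine ⟨zzz, www, uvz, zuv, vzu, vuw, wvu, uwv, ?_⟩
  have integral_polarized : ∫ k, (∏ i, (σp i - τp i) + ∏ i, (σm i - τm i)) k = 0 := by
    have hp i := (hσ i).pos.sub (hτ i).pos
    have hm i := (hσ i).neg.sub (hτ i).neg
    simp only [Fin.prod_univ_three]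
    exact integral_mul_add_mul_eq_zero ((hp 0).mul (hp 1)) (hp 2) ((hm 0).mul (hm 1)) (hm 2)
  rw [triangle_polynomial_identity, ← hz, ← hw, ← hu, ← hv] at integral_polarized
  simpa (maxDischargeDepth := 8) only [integral_add', integral_sub', Integrable.add, Integrable.sub,
    zzz, www, uvz, zuv, vzu, vuw, wvu, uwv] using integral_polarized

theorem triangle_diagrammatic_cutting_equation
    (ω₁ ω₂ ω₃ : ℂ) (hω₁ : ω₁.im < 0) (hω₂ : ω₂.im < 0) (hω₃ : ω₃.im < 0) (p q : ℝ)
    (σ₁p σ₁m σ₂p σ₂m σ₃p σ₃m τ₁p τ₁m τ₂p τ₂m τ₃p τ₃m : ℝ → ℂ)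
    (z₁ z₂ z₃ w₁ w₂ w₃ u₁ u₂ u₃ v₁ v₂ v₃ : ℝ → ℂ)
    (hσ₁p : ∀ k, σ₁p k = (1 / (2 * ω₁)) * ((k : ℂ) - ω₁)⁻¹)
    (hσ₁m : ∀ k, σ₁m k = -(1 / (2 * ω₁)) * ((k : ℂ) + ω₁)⁻¹)
    (hσ₂p : ∀ k, σ₂p k = (1 / (2 * ω₂)) * ((k : ℂ) - (p : ℂ) - ω₂)⁻¹)
    (hσ₂m : ∀ k, σ₂m k = -(1 / (2 * ω₂)) * ((k : ℂ) - (p : ℂ) + ω₂)⁻¹)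
    (hσ₃p : ∀ k, σ₃p k = (1 / (2 * ω₃)) * ((k : ℂ) - (q : ℂ) - ω₃)⁻¹)
    (hσ₃m : ∀ k, σ₃m k = -(1 / (2 * ω₃)) * ((k : ℂ) - (q : ℂ) + ω₃)⁻¹)
    (hτ₁p : ∀ k, τ₁p k = -(starRingEnd ℂ) (σ₁m k))
    (hτ₁m : ∀ k, τ₁m k = -(starRingEnd ℂ) (σ₁p k))
    (hτ₂p : ∀ k, τ₂p k = -(starRingEnd ℂ) (σ₂m k))
    (hτ₂m : ∀ k, τ₂m k = -(starRingEnd ℂ) (σ₂p k))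
    (hτ₃p : ∀ k, τ₃p k = -(starRingEnd ℂ) (σ₃m k))
    (hτ₃m : ∀ k, τ₃m k = -(starRingEnd ℂ) (σ₃p k))
    (hz₁ : ∀ k, z₁ k = σ₁p k + σ₁m k) (hz₂ : ∀ k, z₂ k = σ₂p k + σ₂m k)
    (hz₃ : ∀ k, z₃ k = σ₃p k + σ₃m k)
    (hw₁ : ∀ k, w₁ k = τ₁p k + τ₁m k) (hw₂ : ∀ k, w₂ k = τ₂p k + τ₂m k)
    (hw₃ : ∀ k, w₃ k = τ₃p k + τ₃m k)
    (hu₁ : ∀ k, u₁ k = σ₁p k + τ₁m k) (hu₂ : ∀ k, u₂ k = σ₂p k + τ₂m k)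
    (hu₃ : ∀ k, u₃ k = σ₃p k + τ₃m k)
    (hv₁ : ∀ k, v₁ k = σ₁m k + τ₁p k) (hv₂ : ∀ k, v₂ k = σ₂m k + τ₂p k)
    (hv₃ : ∀ k, v₃ k = σ₃m k + τ₃p k) :
    Integrable (fun k : ℝ => z₁ k * z₂ k * z₃ k) ∧
    Integrable (fun k : ℝ => w₁ k * w₂ k * w₃ k) ∧
    Integrable (fun k : ℝ => u₁ k * v₂ k * z₃ k) ∧
    Integrable (fun k : ℝ => z₁ k * u₂ k * v₃ k) ∧
    Integrable (fun k : ℝ => v₁ k * z₂ k * u₃ k) ∧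
    Integrable (fun k : ℝ => v₁ k * u₂ k * w₃ k) ∧
    Integrable (fun k : ℝ => w₁ k * v₂ k * u₃ k) ∧
    Integrable (fun k : ℝ => u₁ k * w₂ k * v₃ k) ∧
    (∫ k : ℝ, z₁ k * z₂ k * z₃ k) - (∫ k : ℝ, w₁ k * w₂ k * w₃ k)
      - (∫ k : ℝ, u₁ k * v₂ k * z₃ k) - (∫ k : ℝ, z₁ k * u₂ k * v₃ k)
      - (∫ k : ℝ, v₁ k * z₂ k * u₃ k) + (∫ k : ℝ, v₁ k * u₂ k * w₃ k)
      + (∫ k : ℝ, w₁ k * v₂ k * u₃ k) + (∫ k : ℝ, u₁ k * w₂ k * v₃ k) = 0 := by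
  have h₁ := IsPolarizedDecomposition.of_poles hω₁ 0
    (by simpa only [ofReal_zero, sub_zero] using hσ₁p)
    (by simpa only [ofReal_zero, sub_zero] using hσ₁m)
  have h₂ := IsPolarizedDecomposition.of_poles hω₂ p hσ₂p hσ₂m
  have h₃ := IsPolarizedDecomposition.of_poles hω₃ q hσ₃p hσ₃m
  refine triangle_diagrammatic_cutting_equation_general
    ![σ₁p, σ₂p, σ₃p] ![σ₁m, σ₂m, σ₃m] ![τ₁p, τ₂p, τ₃p] ![τ₁m, τ₂m, τ₃m]
    ![z₁, z₂, z₃] ![w₁, w₂, w₃] ![u₁, u₂, u₃] ![v₁, v₂, v₃] ?_ ?_ ?_ ?_ ?_ ?_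
  · simpa [Fin.forall_fin_succ] using ⟨h₁, h₂, h₃⟩
  · simpa [Fin.forall_fin_succ] using
      ⟨h₁.neg_conj hτ₁p hτ₁m, h₂.neg_conj hτ₂p hτ₂m, h₃.neg_conj hτ₃p hτ₃m⟩
  all_goals ext i k; fin_cases i <;> simp [*]
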